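/- Given two Gelfand–Tsetlin patterns with the same bottom row (u_1 < ... < u_n), each of which encodes a lozenge tiling of a half-hexagon, the number of pairs of such patterns (hence of lozenge tilings of the corresponding whole hexagon obtained by gluing along the diagonal) equals (∏_{1≤i<j≤n}(u_j - u_i)/(j-i))². -/

import Mathlib

open Finset

/-- A Gelfand–Tsetlin pattern with `n` rows: row `i` (for `i : Fin n`) has
entries `entry i 0, …, entry i i`, rows interlace, and entries beyond the
row length are normalized to `0`. -/
structure GTPattern (n : ℕ) where
  entry : Fin n → ℕ → ℕ
  interlace : ∀ i : Fin n, ∀ h : i.1 + 1 < n, ∀ j : ℕ, j ≤ i.1 →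
    entry ⟨i.1 + 1, h⟩ j ≤ entry i j ∧ entry i j < entry ⟨i.1 + 1, h⟩ (j + 1)
  support : ∀ i : Fin n, ∀ j : ℕ, i.1 < j → entry i j = 0

/-- The number of Gelfand–Tsetlin patterns with `n` rows and bottom row `u`. -/
noncomputable def GTPcount (n : ℕ) (u : Fin n → ℕ) : ℕ :=
  Nat.card {T : GTPattern n //
    ∀ j : Fin n, T.entry ⟨n - 1, Nat.sub_lt j.pos Nat.one_pos⟩ j.1 = u j}

/-- `GTP` of a finite set: patterns whose bottom row is the increasing
enumeration of `U`. -/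
noncomputable def GTPfinset (U : Finset ℕ) : ℕ :=
  GTPcount U.card (fun j => ((U.orderIsoOfFin rfl j : ℕ)))

/-- `P(A,B) = ∏_{(a,b) ∈ A×B, a<b} (b-a)`. -/
def Pprod (A B : Finset ℕ) : ℕ :=
  ∏ p ∈ (A ×ˢ B).filter (fun p => p.1 < p.2), (p.2 - p.1)

/-- The superfactorial `sf m = 1!·2!···m!`. -/
def superfactorial : ℕ → ℕ
  | 0 => 1
  | m + 1 => superfactorial m * Nat.factorial (m + 1)

theorem GTPattern.ext_entry {n : ℕ} {S T : GTPattern n}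
    (h : ∀ i j, S.entry i j = T.entry i j) : S = T := by
  cases S
  cases T
  congr
  funext i j
  exact h i j

/-- The patterns with `n` rows and bottom row `u`. -/
abbrev GTPatternWith (n : ℕ) (u : Fin n → ℕ) : Type :=
  {T : GTPattern n // ∀ j : Fin n, T.entry ⟨n - 1, Nat.sub_lt j.pos Nat.one_pos⟩ j.1 = u j}

/-- Delete the bottom row. -/
def GTPattern.deleteBottom {n : ℕ} (T : GTPattern (n + 1)) : GTPattern n where
  entry i := T.entry i.castSucc
  interlace i h j hj := T.interlace i.castSucc (by simp) j hj
  support i := T.support i.castSucc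

/-- Append the bottom row `u` to a pattern that interlaces with it. -/
def GTPattern.snoc {n : ℕ} (T : GTPattern n) (u : Fin (n + 1) → ℕ)
    (h : ∀ j : Fin n, u j.castSucc ≤ T.entry ⟨n - 1, Nat.sub_lt j.pos Nat.one_pos⟩ j.1 ∧
      T.entry ⟨n - 1, Nat.sub_lt j.pos Nat.one_pos⟩ j.1 < u j.succ) : GTPattern (n + 1) where
  entry i j := if hi : i.1 < n then T.entry ⟨i.1, hi⟩ j else if hj : j < n + 1 then u ⟨j, hj⟩ else 0
  interlace i hi j hj := by
    have hin : i.1 < n := by omega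
    by_cases hl : i.1 + 1 < n
    · simpa [hin, hl] using T.interlace ⟨i.1, hin⟩ hl j hj
    · have hjn : j < n := by omega
      have hj1 : j < n + 1 := by omega
      have key := h ⟨j, hjn⟩
      have hi' : (⟨i.1, hin⟩ : Fin n) = ⟨n - 1, by omega⟩ := by ext; simp; omega
      simp only [hin, hl, hj1, hjn, dite_true, dite_false, add_lt_add_iff_right, hi']
      exact key
  support i j hij := by
    by_cases hin : i.1 < n
    · simpa [hin] using T.support ⟨i.1, hin⟩ j hij
    · have : ¬ j < n + 1 := by omega
      simp [hin, this]

/-- A pattern with bottom row `u` is an interlacing row `v` with a pattern above it. -/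
def GTPatternWith.equivSigma {n : ℕ} (u : Fin (n + 1) → ℕ) :
    GTPatternWith (n + 1) u ≃
      Σ v : Fintype.piFinset fun j : Fin n => Ico (u j.castSucc) (u j.succ),
        GTPatternWith n v.1 where
  toFun T := ⟨⟨fun j => T.1.deleteBottom.entry ⟨n - 1, Nat.sub_lt j.pos Nat.one_pos⟩ j.1, by
      rw [Fintype.mem_piFinset]
      intro j
      have hj := j.2
      have key := T.1.interlace ⟨n - 1, by omega⟩ (by simp; omega) j (by simp; omega)
      have hn : (⟨n - 1 + 1, by omega⟩ : Fin (n + 1)) = ⟨n + 1 - 1, by omega⟩ := by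
        ext; simp; omega
      have h1 := T.2 j.castSucc
      have h2 := T.2 j.succ
      simp only [hn] at key
      rw [mem_Ico, ← h1, ← h2]
      exact key⟩, T.1.deleteBottom, fun _ => rfl⟩
  invFun P := ⟨P.2.1.snoc u fun j => by
      have h := Fintype.mem_piFinset.1 P.1.2 j
      rw [mem_Ico] at h
      rwa [P.2.2 j], fun j => by simp [GTPattern.snoc]; omega⟩
  left_inv T := by
    apply Subtype.ext
    apply GTPattern.ext_entry
    intro i j
    by_cases hi : i.1 < n
    · simp [GTPattern.snoc, GTPattern.deleteBottom, hi]
    · have hin : i = ⟨n + 1 - 1, Nat.lt_succ_self n⟩ := by ext; simp; omega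
      subst hin
      by_cases hj : j < n + 1
      · simpa [GTPattern.snoc, Nat.lt_succ_iff.1 hj] using (T.2 ⟨j, hj⟩).symm
      · have hjn : ¬ j ≤ n := by omega
        simpa [GTPattern.snoc, hjn] using
          (T.1.support ⟨n + 1 - 1, Nat.lt_succ_self n⟩ j (by simp; omega)).symm
  right_inv P := by
    have h : (P.2.1.snoc u fun j => by
        have h := Fintype.mem_piFinset.1 P.1.2 j
        rw [mem_Ico] at h
        rwa [P.2.2 j]).deleteBottom = P.2.1 := by
      apply GTPattern.ext_entry
      intro i j
      simp [GTPattern.snoc, GTPattern.deleteBottom]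
    refine Sigma.subtype_ext ?_ h
    apply Subtype.ext
    funext j
    simp only [h]
    exact P.2.2 j

theorem strictMono_of_mem_piFinset_Ico {n : ℕ} {u : Fin (n + 1) → ℕ} (hu : StrictMono u)
    {v : Fin n → ℕ} (hv : v ∈ Fintype.piFinset fun j : Fin n => Ico (u j.castSucc) (u j.succ)) :
    StrictMono v := by
  intro i j hij
  have hi := mem_Ico.1 (Fintype.mem_piFinset.1 hv i)
  have hj := mem_Ico.1 (Fintype.mem_piFinset.1 hv j)
  exact hi.2.trans_le ((hu.monotone (Fin.succ_le_castSucc_iff.2 hij)).trans hj.1)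

theorem sum_Ico_choose_cast {a b : ℕ} (hab : a ≤ b) (j : ℕ) :
    ∑ x ∈ Ico a b, (x.choose j : ℚ) = b.choose (j + 1) - a.choose (j + 1) := by
  induction b, hab using Nat.le_induction with
  | base => simp
  | succ b hb ih =>
    rw [sum_Ico_succ_top hb, ih, Nat.choose_succ_succ]
    push_cast
    ring

/-- The matrix of binomial coefficients `(u i).choose j`. -/
def chooseMatrix {n : ℕ} (u : Fin n → ℕ) : Matrix (Fin n) (Fin n) ℚ :=
  Matrix.of fun i j => ((u i).choose j : ℚ)

theorem sum_det_chooseMatrix {n : ℕ} {u : Fin (n + 1) → ℕ} (hu : Monotone u) :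
    ∑ v ∈ Fintype.piFinset fun j : Fin n => Ico (u j.castSucc) (u j.succ),
      (chooseMatrix v).det = (chooseMatrix u).det := by
  have h1 := (Matrix.detRowAlternating (n := Fin n) (R := ℚ)).toMultilinearMap.map_sum_finset
    (fun _ x (j : Fin n) => ((x : ℕ).choose j : ℚ)) (fun j : Fin n => Ico (u j.castSucc) (u j.succ))
  refine h1.symm.trans ?_
  let B : Matrix (Fin (n + 1)) (Fin (n + 1)) ℚ := Fin.cons (chooseMatrix u 0)
    fun i j => chooseMatrix u i.succ j - chooseMatrix u i.castSucc j
  have hB : (chooseMatrix u).det = B.det :=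
    Matrix.det_eq_of_forall_row_eq_smul_add_pred (fun _ => 1) (fun j => by simp [B])
      (fun i j => by simp [B])
  rw [hB, Matrix.det_succ_column_zero, Fin.sum_univ_succ, sum_eq_zero, add_zero]
  · have : B 0 0 = 1 := by simp [B, chooseMatrix]
    rw [this]
    simp only [Fin.val_zero, pow_zero, one_mul]
    change Matrix.det _ = _
    congr 1
    ext i j
    change _ = chooseMatrix u i.succ j.succ - chooseMatrix u i.castSucc j.succ
    simp [chooseMatrix, Finset.sum_apply, sum_Ico_choose_cast (hu (Fin.castSucc_lt_succ (i := i)).le)]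
  · intro i _
    simp [B, chooseMatrix]

theorem finite_and_card_gtPatternWith (n : ℕ) (u : Fin n → ℕ) (hu : StrictMono u) :
    Finite (GTPatternWith n u) ∧ (Nat.card (GTPatternWith n u) : ℚ) = (chooseMatrix u).det := by
  induction n with
  | zero =>
    have : Unique (GTPatternWith 0 u) :=
      { default := ⟨⟨fun i => i.elim0, fun i => i.elim0, fun i => i.elim0⟩, fun j => j.elim0⟩
        uniq := fun T => Subtype.ext (GTPattern.ext_entry fun i => i.elim0) }
    exact ⟨inferInstance, by simp⟩
  | succ n ih =>
    have ih' (v : Fintype.piFinset fun j : Fin n => Ico (u j.castSucc) (u j.succ)) :=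
      ih v.1 (strictMono_of_mem_piFinset_Ico hu v.2)
    have hfin := fun v => (ih' v).1
    refine ⟨Finite.of_equiv _ (GTPatternWith.equivSigma u).symm, ?_⟩
    rw [Nat.card_congr (GTPatternWith.equivSigma u), Nat.card_sigma, Nat.cast_sum,
      sum_congr rfl fun v _ => (ih' v).2, ← sum_det_chooseMatrix hu.monotone]
    exact sum_coe_sort _ fun v => (chooseMatrix v).det

theorem det_vandermonde_natCast {n : ℕ} (u : Fin n → ℕ) :
    (Matrix.vandermonde fun i => (u i : ℚ)).det =
      (∏ i : Fin n, (Nat.factorial i : ℚ)) * (chooseMatrix u).det := by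
  rw [Matrix.det_eval_matrixOfPolynomials_eq_det_vandermonde _
    (fun i : Fin n => descPochhammer ℚ i) (fun i => descPochhammer_natDegree ℚ i)
    (fun i => monic_descPochhammer ℚ i), ← Matrix.det_mul_row]
  congr 1
  ext i j
  simp [chooseMatrix, descPochhammer_eval_eq_descFactorial,
    Nat.descFactorial_eq_factorial_mul_choose]

theorem det_chooseMatrix_val (n : ℕ) : (chooseMatrix fun i : Fin n => i.1).det = 1 := by
  rw [Matrix.det_of_isLowerTriangular]
  · simp [chooseMatrix]
  · intro i j hij
    simpa [chooseMatrix] using Nat.choose_eq_zero_of_lt (show i.1 < j.1 from hij)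

theorem prod_filter_lt_eq_det_vandermonde {n : ℕ} (v : Fin n → ℚ) :
    ∏ p ∈ univ.filter (fun p : Fin n × Fin n => p.1 < p.2), (v p.2 - v p.1) =
      (Matrix.vandermonde v).det := by
  rw [Matrix.det_vandermonde, prod_sigma']
  refine prod_bij' (fun p _ => ⟨p.1, p.2⟩) (fun p _ => (p.1, p.2)) ?_ ?_ ?_ ?_ ?_ <;> simp

theorem det_chooseMatrix_eq_prod {n : ℕ} (u : Fin n → ℕ) :
    (chooseMatrix u).det = ∏ p ∈ univ.filter (fun p : Fin n × Fin n => p.1 < p.2),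
      (((u p.2 : ℚ) - (u p.1 : ℚ)) / ((p.2.1 : ℚ) - (p.1.1 : ℚ))) := by
  rw [prod_div_distrib, prod_filter_lt_eq_det_vandermonde fun i => (u i : ℚ),
    prod_filter_lt_eq_det_vandermonde fun i : Fin n => (i.1 : ℚ), det_vandermonde_natCast,
    det_vandermonde_natCast, det_chooseMatrix_val, mul_one, mul_div_cancel_left₀]
  exact prod_ne_zero_iff.2 fun i _ => by positivity

/-- Pairs of GT patterns with the same bottom row (tilings of the whole
hexagon) are counted by the square of the product formula. -/
theorem stmt_13 (n : ℕ) (u : Fin n → ℕ) (hu : StrictMono u) :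
    (Nat.card
        ({T : GTPattern n //
            ∀ j : Fin n, T.entry ⟨n - 1, Nat.sub_lt j.pos Nat.one_pos⟩ j.1 = u j} ×
         {T : GTPattern n //
            ∀ j : Fin n, T.entry ⟨n - 1, Nat.sub_lt j.pos Nat.one_pos⟩ j.1 = u j}) : ℚ) =
      (∏ p ∈ Finset.univ.filter (fun p : Fin n × Fin n => p.1 < p.2),
        (((u p.2 : ℚ) - (u p.1 : ℚ)) / ((p.2.1 : ℚ) - (p.1.1 : ℚ)))) ^ 2 := by
  change (Nat.card (GTPatternWith n u × GTPatternWith n u) : ℚ) = _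
  rw [Nat.card_prod, Nat.cast_mul, (finite_and_card_gtPatternWith n u hu).2,
    det_chooseMatrix_eq_prod, sq]
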